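/- Let f(w) = w²/2 be the Burgers flux and let w₀ ≤ 0 be a real number. Define E(w₀) = { w ∈ ℝ : for every pair (η, ξ) of differentiable functions ℝ → ℝ with η convex and ξ′(s) = η′(s)·s for all s, one has ξ(w) − ξ(w₀) − η′(w₀)·(w²/2 − w₀²/2) ≤ 0 }. Then E(w₀) = (−∞, 0]. -/

import Mathlib

/-!
For a `C¹` flux `f`, the boundary entropy inequality at `w` says that
`∫ s in w₀..w, (η'(s) - η'(w₀)) * f'(s) ≤ 0`, where `η'` is nondecreasing. If `f' ≤ 0` between `w₀`
and `w`, the sign of the integrand settles this for every `η`. If instead `f' > 0` between some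
`c ≥ w₀` and `w > c`, an entropy whose derivative is `(s - c)⁺` sees only that region and violates
the inequality.
-/

open Set

/-- Entropy pairs `(η, ξ)`, in the sense of Lax, of the scalar conservation law `∂ₜw + ∂ₓf(w) = 0`:
a convex entropy `η` with entropy flux `ξ`. Since `deriv` is `0` where a function is not
differentiable, the relation `ξ' = η' f'` has its intended meaning for differentiable `f`. -/
structure IsEntropyPair (f η ξ : ℝ → ℝ) : Prop where
  convexOn : ConvexOn ℝ univ η
  differentiable : Differentiable ℝ η
  differentiable_flux : Differentiable ℝ ξ
  deriv_flux : ∀ s, deriv ξ s = deriv η s * deriv f s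

/-- The Dubois–Le Floch set of boundary traces admissible for the boundary data `w₀` on the
half-line `x > 0`, for the conservation law with flux `f`. -/
def entropyBoundarySet (f : ℝ → ℝ) (w₀ : ℝ) : Set ℝ :=
  {w | ∀ η ξ, IsEntropyPair f η ξ → ξ w - ξ w₀ - deriv η w₀ * (f w - f w₀) ≤ 0}

section

variable {f η ξ m : ℝ → ℝ} {w₀ w c : ℝ}

namespace IsEntropyPair

theorem monotone_deriv (h : IsEntropyPair f η ξ) : Monotone (deriv η) :=
  monotoneOn_univ.1 <| h.convexOn.monotoneOn_deriv fun s _ => h.differentiable s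

theorem sub_sub_eq_integral (h : IsEntropyPair f η ξ) (hf : ContDiff ℝ 1 f) (w₀ w : ℝ) :
    ξ w - ξ w₀ - deriv η w₀ * (f w - f w₀) =
      ∫ s in w₀..w, (deriv η s - deriv η w₀) * deriv f s := by
  have hderiv (s : ℝ) : HasDerivAt (fun x => ξ x - deriv η w₀ * f x)
      ((deriv η s - deriv η w₀) * deriv f s) s := by
    rw [sub_mul, ← h.deriv_flux]
    exact (h.differentiable_flux s).hasDerivAt.sub
      ((hf.differentiable_one s).hasDerivAt.const_mul _)
  have hint : IntervalIntegrable (fun s => (deriv η s - deriv η w₀) * deriv f s)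
      MeasureTheory.volume w₀ w :=
    (h.monotone_deriv.intervalIntegrable.sub intervalIntegrable_const).mul_continuousOn
      hf.continuous_deriv_one.continuousOn
  rw [intervalIntegral.integral_eq_sub_of_hasDerivAt (fun s _ => hderiv s) hint]
  ring

theorem of_continuous_monotone (hf : ContDiff ℝ 1 f) (hm : Continuous m) (hmono : Monotone m)
    (a : ℝ) :
    IsEntropyPair f (fun x => ∫ s in a..x, m s) (fun x => ∫ s in a..x, m s * deriv f s) := by
  have hη : deriv (fun x => ∫ s in a..x, m s) = m := funext (hm.deriv_integral m a)
  have hmf : Continuous fun s => m s * deriv f s := hm.mul hf.continuous_deriv_one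
  have hη_diff : Differentiable ℝ fun x => ∫ s in a..x, m s := fun x =>
    (hm.integral_hasStrictDerivAt a x).hasDerivAt.differentiableAt
  exact
    { convexOn := Monotone.convexOn_univ_of_deriv hη_diff (hη.symm ▸ hmono)
      differentiable := hη_diff
      differentiable_flux := fun x =>
        (hmf.integral_hasStrictDerivAt a x).hasDerivAt.differentiableAt
      deriv_flux := fun x => by rw [hη, hmf.deriv_integral] }

end IsEntropyPair

theorem integral_nonpos_of_mem_entropyBoundarySet (hf : ContDiff ℝ 1 f) (hm : Continuous m)
    (hmono : Monotone m) (hw : w ∈ entropyBoundarySet f w₀) :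
    ∫ s in w₀..w, (m s - m w₀) * deriv f s ≤ 0 := by
  have hpair := IsEntropyPair.of_continuous_monotone hf hm hmono w₀
  have hineq := hw _ _ hpair
  rw [hpair.sub_sub_eq_integral hf] at hineq
  simpa only [hm.deriv_integral] using hineq

theorem mem_entropyBoundarySet_of_deriv_nonpos (hf : ContDiff ℝ 1 f)
    (hneg : ∀ s ∈ uIcc w₀ w, deriv f s ≤ 0) : w ∈ entropyBoundarySet f w₀ := by
  intro η ξ h
  rw [h.sub_sub_eq_integral hf]
  rcases le_total w₀ w with hle | hle
  · rw [uIcc_of_le hle] at hneg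
    rw [← neg_nonneg, ← intervalIntegral.integral_neg]
    exact intervalIntegral.integral_nonneg hle fun s hs => neg_nonneg.2 <|
      mul_nonpos_of_nonneg_of_nonpos (sub_nonneg.2 (h.monotone_deriv hs.1)) (hneg s hs)
  · rw [uIcc_of_ge hle] at hneg
    rw [intervalIntegral.integral_symm, neg_nonpos]
    exact intervalIntegral.integral_nonneg hle fun s hs =>
      mul_nonneg_of_nonpos_of_nonpos (sub_nonpos.2 (h.monotone_deriv hs.2)) (hneg s hs)

theorem notMem_entropyBoundarySet_of_deriv_pos (hf : ContDiff ℝ 1 f) (hw₀ : w₀ ≤ c) (hw : c < w)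
    (hpos : ∀ s ∈ Ioc c w, 0 < deriv f s) : w ∉ entropyBoundarySet f w₀ := by
  intro hmem
  have hcont : Continuous fun s : ℝ => max (s - c) 0 := by fun_prop
  have hmono : Monotone fun s : ℝ => max (s - c) 0 := fun _ _ hst =>
    max_le_max_right 0 (sub_le_sub_right hst c)
  have hnonpos : ∫ s in w₀..w, max (s - c) 0 * deriv f s ≤ 0 := by
    simpa only [max_eq_right (sub_nonpos.2 hw₀), sub_zero] using
      integral_nonpos_of_mem_entropyBoundarySet hf hcont hmono hmem
  have hnonneg : ∀ s ∈ Ioc w₀ w, 0 ≤ max (s - c) 0 * deriv f s := by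
    intro s hs
    rcases le_or_gt s c with hsc | hsc
    · rw [max_eq_right (sub_nonpos.2 hsc), zero_mul]
    · exact mul_nonneg (le_max_right _ _) (hpos s ⟨hsc, hs.2⟩).le
  have hpos_w : 0 < max (w - c) 0 * deriv f w :=
    mul_pos (lt_max_of_lt_left (sub_pos.2 hw)) (hpos w (right_mem_Ioc.2 hw))
  have hw₀w : w₀ < w := hw₀.trans_lt hw
  exact hnonpos.not_gt <| intervalIntegral.integral_pos hw₀w
    (hcont.mul hf.continuous_deriv_one).continuousOn hnonneg ⟨w, right_mem_Icc.2 hw₀w.le, hpos_w⟩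

theorem burgers_entropy_boundary_set_nonpos_general (hf : ContDiff ℝ 1 f)
    (hneg : ∀ s ≤ c, deriv f s ≤ 0) (hpos : ∀ s > c, 0 < deriv f s) (hw₀ : w₀ ≤ c) :
    entropyBoundarySet f w₀ = Iic c := by
  ext w
  constructor
  · contrapose!
    exact fun hw => notMem_entropyBoundarySet_of_deriv_pos hf hw₀ (not_le.1 hw)
      fun s hs => hpos s hs.1
  · exact fun hw => mem_entropyBoundarySet_of_deriv_nonpos hf
      fun s hs => hneg s (hs.2.trans (sup_le hw₀ hw))

end

theorem entropyBoundarySet_sq_div_two (w₀ : ℝ) :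
    entropyBoundarySet (fun x => x ^ 2 / 2) w₀ =
      {w : ℝ | ∀ η ξ : ℝ → ℝ, ConvexOn ℝ univ η → Differentiable ℝ η →
        Differentiable ℝ ξ → (∀ s, deriv ξ s = deriv η s * s) →
        ξ w - ξ w₀ - deriv η w₀ * (w ^ 2 / 2 - w₀ ^ 2 / 2) ≤ 0} := by
  ext w
  constructor
  · intro hw η ξ hconv hη hξ hderiv
    exact hw η ξ ⟨hconv, hη, hξ, fun s => by simpa using hderiv s⟩
  · intro hw η ξ h
    exact hw η ξ h.convexOn h.differentiable h.differentiable_flux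
      fun s => by simpa using h.deriv_flux s

/-- For the Burgers flux `f(w) = w²/2` and boundary data `w₀ ≤ 0`, the
Dubois–Le Floch entropy boundary set equals `(-∞, 0]`. -/
theorem burgers_entropy_boundary_set_nonpos
    (w₀ : ℝ) (hw₀ : w₀ ≤ 0) :
    {w : ℝ | ∀ η ξ : ℝ → ℝ, ConvexOn ℝ Set.univ η → Differentiable ℝ η →
      Differentiable ℝ ξ → (∀ s, deriv ξ s = deriv η s * s) →
      ξ w - ξ w₀ - deriv η w₀ * (w ^ 2 / 2 - w₀ ^ 2 / 2) ≤ 0}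
    = Set.Iic 0 := by
  rw [← entropyBoundarySet_sq_div_two]
  exact burgers_entropy_boundary_set_nonpos_general (by fun_prop)
    (fun s hs => by simpa using hs) (fun s hs => by simpa using hs) hw₀
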